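/- Let κ be an infinite cardinal and let J be a path-connected continuum with w(J) ≤ κ. Then there exists a family of 2^κ pairwise non-homeomorphic path-connected continua, each of weight κ and cardinality max{κ, |J|}; moreover, if J is balanced and w(J) = κ, then every member of the family can be taken to be balanced. -/

import Mathlib

/-!
Write `K = J × J`; no point of `K` separates it. For a nondegenerate Stone space `Y`, collapse one
slice `Y × {p}` of `Y × K` to a point. The resulting cone `KCone Y K p` is a path-connected
continuum whose only cut point is its apex, and deleting the apex leaves `Y × (K \ {p})`, whose
components are the sets `{y} × (K \ {p})`; so the cone determines `Y` up to homeomorphism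
(`KCone.nonempty_homeomorph`). If `J` is balanced and the cone is no larger than `J` in cardinality
and weight, the cone is balanced because each of its nonempty open sets contains a copy of a
nonempty open subset of `J` (`KCone.isBalanced`).

It remains to find `2 ^ κ` pairwise non-homeomorphic Stone spaces of weight `κ` and size at most
`κ * 𝔠`, which is harmless because `𝔠 ≤ #J` by Urysohn's lemma. For a set `A` of ordinals below `κ`,
start from the ordinals `≤ ω ^ κ` and replace every ordinal outside the gaps
`(ω ^ a, ω ^ (a + 1))`, `a ∈ A`, by a Cantor set of copies, of which only one distinguished copy is
approached from within the gaps (`marked`). The fattened ordinals form the perfect kernel, and the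
Cantor–Bendixson derivatives of its complement consist of the multiples of the powers of `ω` in the
gaps (`scatteredDeriv_marked`). A point of the kernel that is a limit of the `a`-th such derivative
but not of the next one lies over `ω ^ (a + 1)`, and there is such a point exactly when `a ∈ A`; so
`A` is a topological invariant of the space (`rankInvariant_marked`).
-/

universe u

open Cardinal Topology

/-- The weight of a topological space: the least cardinality of a basis for its topology. -/
noncomputable def wt (X : Type u) [TopologicalSpace X] : Cardinal.{u} :=
  sInf { c : Cardinal.{u} | ∃ B : Set (Set X), TopologicalSpace.IsTopologicalBasis B ∧ #B = c }

/-- A continuum: a compact connected Hausdorff space with more than one point. -/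
def IsContinuum (X : Type u) [TopologicalSpace X] : Prop :=
  CompactSpace X ∧ ConnectedSpace X ∧ T2Space X ∧ Nontrivial X

/-- A space is balanced if every nonempty open subspace has the same cardinality and the
same weight as the whole space. -/
def IsBalanced (X : Type u) [TopologicalSpace X] : Prop :=
  ∀ U : Set X, IsOpen U → U.Nonempty → #U = #X ∧ wt U = wt X

section

open Set

/-! ### Weight and cardinality -/

theorem exists_basis_wt (X : Type u) [TopologicalSpace X] :
    ∃ B : Set (Set X), TopologicalSpace.IsTopologicalBasis B ∧ #B = wt X :=
  csInf_mem (s := { c : Cardinal.{u} | ∃ B : Set (Set X),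
    TopologicalSpace.IsTopologicalBasis B ∧ #B = c })
    ⟨_, _, TopologicalSpace.isTopologicalBasis_opens, rfl⟩

theorem wt_le_of_basis {X : Type u} [TopologicalSpace X] {B : Set (Set X)}
    (hB : TopologicalSpace.IsTopologicalBasis B) : wt X ≤ #B :=
  csInf_le' ⟨B, hB, rfl⟩

theorem wt_le_of_isInducing {X Z : Type u} [TopologicalSpace X] [TopologicalSpace Z] {f : X → Z}
    (hf : IsInducing f) : wt X ≤ wt Z := by
  obtain ⟨B, hB, hc⟩ := exists_basis_wt Z
  exact (wt_le_of_basis (hB.isInducing hf)).trans (hc ▸ mk_image_le)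

theorem wt_le_of_secondCountable (X : Type u) [TopologicalSpace X] [SecondCountableTopology X] :
    wt X ≤ ℵ₀ :=
  (wt_le_of_basis (TopologicalSpace.isBasis_countableBasis X)).trans
    (TopologicalSpace.countable_countableBasis X).le_aleph0

theorem wt_prod_le {X Z : Type u} [TopologicalSpace X] [TopologicalSpace Z] {κ : Cardinal.{u}}
    (hκ : ℵ₀ ≤ κ) (hX : wt X ≤ κ) (hZ : wt Z ≤ κ) : wt (X × Z) ≤ κ := by
  obtain ⟨B, hB, hc⟩ := exists_basis_wt X
  obtain ⟨C, hC, hd⟩ := exists_basis_wt Z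
  calc wt (X × Z) ≤ #(image2 (· ×ˢ ·) B C) := wt_le_of_basis (hB.prod hC)
    _ ≤ #B * #C := mk_image2_le
    _ ≤ κ * κ := mul_le_mul' (hc ▸ hX) (hd ▸ hZ)
    _ = κ := mul_eq_self hκ

/-- The finite unions `V` of basic open sets of `X` yield the open sets `Z \ f (X \ V)`, and these
form a basis of `Z`, since the fibres of `f` are compact. -/
theorem wt_le_of_surjective {X Z : Type u} [TopologicalSpace X] [TopologicalSpace Z]
    [CompactSpace X] [T2Space Z] {κ : Cardinal.{u}} (hκ : ℵ₀ ≤ κ) (hX : wt X ≤ κ) {f : X → Z}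
    (hf : Continuous f) (hs : Function.Surjective f) : wt Z ≤ κ := by
  obtain ⟨B, hB, hc⟩ := exists_basis_wt X
  let V : Finset B → Set Z := fun F => (f '' (⋃ b ∈ F, (b : Set X))ᶜ)ᶜ
  have hb : TopologicalSpace.IsTopologicalBasis (range V) := by
    refine TopologicalSpace.isTopologicalBasis_of_isOpen_of_nhds ?_ ?_
    · rintro _ ⟨F, rfl⟩
      have : IsOpen (⋃ b ∈ F, (b : Set X)) := isOpen_biUnion fun b _ => hB.isOpen b.2
      exact (hf.isClosedMap _ this.isClosed_compl).isOpen_compl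
    · intro z U hz hU
      have hK : IsCompact (f ⁻¹' {z}) := (isClosed_singleton.preimage hf).isCompact
      have hU' := hU.preimage hf
      obtain ⟨F, hF⟩ := hK.elim_finite_subcover
        (fun b : {b : B // (b : Set X) ⊆ f ⁻¹' U} => (b : Set X)) (fun b => hB.isOpen b.1.2) (by
          intro x hx
          obtain ⟨b, hbB, hxb, hbU⟩ := hB.exists_subset_of_mem_open
            (show x ∈ f ⁻¹' U from by rw [mem_preimage, show f x = z from hx]; exact hz) hU'
          exact mem_iUnion.2 ⟨⟨⟨b, hbB⟩, hbU⟩, hxb⟩)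
      classical
      refine ⟨V (F.image Subtype.val), ⟨_, rfl⟩, ?_, ?_⟩
      · rintro ⟨x, hx, hxz⟩
        apply hx
        have := hF (show x ∈ f ⁻¹' {z} from hxz)
        simp only [mem_iUnion, Finset.mem_image] at this ⊢
        obtain ⟨b, hbF, hxb⟩ := this
        exact ⟨b.1, ⟨b, hbF, rfl⟩, hxb⟩
      · intro w hw
        obtain ⟨x, rfl⟩ := hs w
        by_contra hxU
        refine hw ⟨x, fun hx => hxU ?_, rfl⟩
        simp only [mem_iUnion, Finset.mem_image] at hx
        obtain ⟨b, ⟨b', -, rfl⟩, hxb⟩ := hx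
        exact b'.2 hxb
  have : #(Finset B) ≤ κ := by
    rcases finite_or_infinite B with h | h
    · exact (mk_le_aleph0).trans hκ
    · rw [mk_finset_of_infinite]; exact hc ▸ hX
  exact (wt_le_of_basis hb).trans (mk_range_le.trans this)

/-- Disjoint open neighbourhoods of all pairs of distinct points already generate a Hausdorff
topology, and a compact Hausdorff topology has no strictly coarser Hausdorff topology. -/
theorem wt_le_mk (X : Type u) [t : TopologicalSpace X] [CompactSpace X] [T2Space X]
    {κ : Cardinal.{u}} (hκ : ℵ₀ ≤ κ) (hX : #X ≤ κ) : wt X ≤ κ := by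
  choose! U V hU hV hxU hyV hd using fun (x y : X) (h : x ≠ y) => t2_separation h
  let S : Set (Set X) := range (fun p : {p : X × X // p.1 ≠ p.2} => U p.1.1 p.1.2) ∪
    range (fun p : {p : X × X // p.1 ≠ p.2} => V p.1.1 p.1.2)
  have hle : t ≤ TopologicalSpace.generateFrom S := by
    refine le_generateFrom ?_
    rintro _ (⟨p, rfl⟩ | ⟨p, rfl⟩)
    exacts [hU _ _ p.2, hV _ _ p.2]
  have hT2 : @T2Space X (TopologicalSpace.generateFrom S) := by
    refine @T2Space.mk X (TopologicalSpace.generateFrom S) ?_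
    intro x y h
    exact ⟨U x y, V x y,
      TopologicalSpace.isOpen_generateFrom_of_mem (Or.inl ⟨⟨(x, y), h⟩, rfl⟩),
      TopologicalSpace.isOpen_generateFrom_of_mem (Or.inr ⟨⟨(x, y), h⟩, rfl⟩),
      hxU _ _ h, hyV _ _ h, hd _ _ h⟩
  have heq : t = TopologicalSpace.generateFrom S := by
    refine le_antisymm hle fun s hs => ?_
    have := @Continuous.isClosedMap X X t (TopologicalSpace.generateFrom S) _ hT2 id
      (continuous_id_iff_le.2 hle) sᶜ hs.isClosed_compl
    rw [image_id] at this
    exact (@isClosed_compl_iff X (TopologicalSpace.generateFrom S) s).1 this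
  have hb := TopologicalSpace.isTopologicalBasis_of_subbasis heq
  have hS : #S ≤ κ := by
    refine (mk_union_le _ _).trans ?_
    have h1 : #{p : X × X // p.1 ≠ p.2} ≤ κ :=
      (mk_subtype_le _).trans (by
        rw [← mul_def]
        exact (mul_le_mul' hX hX).trans (mul_eq_self hκ).le)
    exact (add_le_add (mk_range_le.trans h1) (mk_range_le.trans h1)).trans (add_eq_self hκ).le
  have hF : #(Finset S) ≤ κ := by
    rcases finite_or_infinite S with h | h
    · exact mk_le_aleph0.trans hκ
    · rwa [mk_finset_of_infinite]
  refine (wt_le_of_basis hb).trans (le_trans (mk_le_mk_of_subset ?_)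
    ((mk_range_le (f := fun F : Finset S => ⋂₀ (Subtype.val '' (F : Set S)))).trans hF))
  rintro _ ⟨f, ⟨hf, hfS⟩, rfl⟩
  refine ⟨(hf.preimage Subtype.val_injective.injOn).toFinset, ?_⟩
  simp only [Finite.coe_toFinset, Subtype.image_preimage_coe, inter_eq_right.2 hfS]

/-- A family of points, each having a neighbourhood that misses all the others, bounds the weight
from below. -/
theorem mk_le_wt {I X : Type u} [TopologicalSpace X] (x : I → X) (U : I → Set X)
    (hU : ∀ i, IsOpen (U i)) (hx : ∀ i j, x j ∈ U i ↔ j = i) : #I ≤ wt X := by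
  obtain ⟨B, hB, hc⟩ := exists_basis_wt X
  choose b hbB hxb hbU using fun i => hB.exists_subset_of_mem_open ((hx i i).2 rfl) (hU i)
  rw [← hc]
  refine mk_le_of_injective (f := fun i => (⟨b i, hbB i⟩ : B)) fun i j h => ?_
  have h' : b i = b j := congrArg Subtype.val h
  exact (hx j i).1 (hbU j (h' ▸ hxb i))

/-- A Urysohn function on a nondegenerate continuum maps onto `[0, 1]`. -/
theorem continuum_le_mk {X : Type u} [TopologicalSpace X] [CompactSpace X] [ConnectedSpace X]
    [T2Space X] [Nontrivial X] : 𝔠 ≤ #X := by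
  obtain ⟨x, y, hxy⟩ := exists_pair_ne X
  obtain ⟨f, hf0, hf1, -⟩ := exists_continuous_zero_one_of_isClosed
    (isClosed_singleton (x := x)) (isClosed_singleton (x := y)) (by simpa using hxy)
  have h0 : f x = 0 := hf0 rfl
  have h1 : f y = 1 := hf1 rfl
  have hsub : Icc (0 : ℝ) 1 ⊆ range f := by
    have := (isPreconnected_range f.continuous).Icc_subset ⟨x, rfl⟩ ⟨y, rfl⟩
    rwa [h0, h1] at this
  have h2 : lift.{u} Cardinal.continuum.{0} ≤ lift.{0} #X := by
    rw [← mk_Icc_real (zero_lt_one : (0 : ℝ) < 1)]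
    exact (lift_le.2 (mk_le_mk_of_subset hsub)).trans mk_range_le_lift
  simpa using h2

/-! ### Cones -/

theorem isPreconnected_compl_singleton_prod {J : Type u} [TopologicalSpace J] [ConnectedSpace J]
    [Nontrivial J] (q : J × J) : IsPreconnected ({q}ᶜ : Set (J × J)) := by
  obtain ⟨a, b⟩ := q
  obtain ⟨a', ha⟩ := exists_ne a
  obtain ⟨b', hb⟩ := exists_ne b
  have hv : ∀ x : J, IsPreconnected (range fun y : J => (x, y)) := fun x =>
    isPreconnected_range (by fun_prop)
  have hh : ∀ y : J, IsPreconnected (range fun x : J => (x, y)) := fun y =>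
    isPreconnected_range (by fun_prop)
  refine isPreconnected_of_forall (a', b') fun z hz => ?_
  obtain ⟨x, y⟩ := z
  -- A cross of one vertical and one horizontal line, avoiding `(a, b)`, links `z` to `(a', b')`.
  by_cases hx : x = a
  · have hy : y ≠ b := fun hy => hz (by simp [hx, hy])
    refine ⟨(range fun x : J => (x, y)) ∪ range fun y : J => (a', y), ?_, Or.inr ⟨b', rfl⟩,
      Or.inl ⟨x, rfl⟩, (hh y).union (a', y) ⟨a', rfl⟩ ⟨y, rfl⟩ (hv a')⟩
    rintro _ (⟨t, rfl⟩ | ⟨t, rfl⟩) h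
    · exact hy (congrArg Prod.snd h)
    · exact ha (congrArg Prod.fst h)
  · refine ⟨(range fun y : J => (x, y)) ∪ range fun x : J => (x, b'), ?_, Or.inr ⟨a', rfl⟩,
      Or.inl ⟨y, rfl⟩, (hv x).union (x, b') ⟨b', rfl⟩ ⟨x, rfl⟩ (hh b')⟩
    rintro _ (⟨t, rfl⟩ | ⟨t, rfl⟩) h
    · exact hx (congrArg Prod.fst h)
    · exact hb (congrArg Prod.snd h)

/-- The cone over `Y` with generating continuum `K` and apex `p`: the quotient of `Y × K` that
collapses `Y × {p}` to a point. For compact `Y` and `K` this is the one-point compactification of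
`Y × (K \ {p})`, which is how it is encoded; the apex is the point at infinity. -/
abbrev KCone (Y K : Type u) [TopologicalSpace Y] [TopologicalSpace K] (p : K) : Type u :=
  OnePoint (Y × {k : K // k ≠ p})

open Classical in
/-- The quotient map from `Y × K` onto the cone. -/
noncomputable def KCone.collapse {Y K : Type u} [TopologicalSpace Y] [TopologicalSpace K] (p : K)
    (z : Y × K) : KCone Y K p :=
  if h : z.2 = p then OnePoint.infty else OnePoint.some (z.1, ⟨z.2, h⟩)

namespace KCone

section

variable {Y Z K : Type u} [TopologicalSpace Y] [TopologicalSpace Z] [TopologicalSpace K] {p : K}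

theorem collapse_apex (y : Y) : collapse p (y, p) = OnePoint.infty := by simp [collapse]

theorem collapse_coe (y : Y) (k : {k : K // k ≠ p}) :
    collapse p (y, (k : K)) = OnePoint.some (y, k) := by
  rw [collapse, dif_neg k.2]

theorem collapse_of_ne (y : Y) {k : K} (hk : k ≠ p) :
    collapse p (y, k) = OnePoint.some (y, ⟨k, hk⟩) := collapse_coe y ⟨k, hk⟩

theorem collapse_surjective [Nonempty Y] : Function.Surjective (collapse (Y := Y) p) := by
  intro z
  induction z using OnePoint.rec with
  | infty => exact ⟨(Classical.arbitrary Y, p), collapse_apex _⟩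
  | coe z => exact ⟨(z.1, z.2), collapse_coe _ _⟩

theorem continuous_collapse [CompactSpace Y] [T2Space Y] [CompactSpace K] [T2Space K] :
    Continuous (collapse (Y := Y) p) := by
  let j : Y × {k : K // k ≠ p} → Y × K := Prod.map id Subtype.val
  have hj : IsOpenEmbedding j := IsOpenEmbedding.id.prodMap
    (isOpen_compl_singleton (x := p)).isOpenEmbedding_subtypeVal
  have key : ∀ s : Set (KCone Y K p), OnePoint.infty ∉ s →
      collapse p ⁻¹' s = j '' (OnePoint.some ⁻¹' s) := by
    intro s hs
    ext ⟨y, k⟩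
    by_cases hk : k = p
    · subst hk
      simp only [mem_preimage, collapse_apex, hs, false_iff]
      rintro ⟨⟨y', k'⟩, -, h⟩
      exact k'.2 (congrArg Prod.snd h)
    · simp only [mem_preimage, collapse_of_ne y hk]
      constructor
      · intro h
        exact ⟨(y, ⟨k, hk⟩), h, rfl⟩
      · rintro ⟨⟨y', k'⟩, h, h'⟩
        obtain ⟨rfl, rfl⟩ := Prod.ext_iff.1 h'
        exact h
  refine ⟨fun s hs => ?_⟩
  by_cases hi : OnePoint.infty ∈ s
  · rw [← isClosed_compl_iff, ← preimage_compl, key _ (by simpa using hi)]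
    exact (((OnePoint.isOpen_iff_of_mem' hi).1 hs).1.image hj.continuous).isClosed
  · rw [key s hi]
    exact hj.isOpenMap _ ((OnePoint.isOpen_iff_of_notMem hi).1 hs)

theorem pathConnectedSpace [CompactSpace Y] [T2Space Y] [CompactSpace K] [T2Space K]
    [PathConnectedSpace K] : PathConnectedSpace (KCone Y K p) := by
  have h : ∀ z : KCone Y K p, Joined z OnePoint.infty := by
    intro z
    induction z using OnePoint.rec with
    | infty => exact Joined.refl _
    | coe z =>
      obtain ⟨y, k⟩ := z
      have hc : Continuous fun k : K => collapse p (y, k) :=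
        continuous_collapse.comp (by fun_prop)
      have := (PathConnectedSpace.somePath (k : K) p).map hc
      rw [collapse_coe, collapse_apex] at this
      exact ⟨this⟩
  exact ⟨⟨OnePoint.infty⟩, fun x y => (h x).trans (h y).symm⟩

/-- Deleting a point other than the apex leaves a union of connected sets through the apex. -/
theorem isPreconnected_compl_singleton [CompactSpace Y] [T2Space Y] [CompactSpace K] [T2Space K]
    [ConnectedSpace K] (hK : ∀ k : K, IsPreconnected ({k}ᶜ : Set K)) {x : KCone Y K p}
    (hx : x ≠ OnePoint.infty) : IsPreconnected ({x}ᶜ : Set (KCone Y K p)) := by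
  obtain ⟨⟨y₀, k₀⟩, rfl⟩ := OnePoint.ne_infty_iff_exists.1 hx
  have hc : ∀ y : Y, Continuous fun k : K => collapse p (y, k) := fun y =>
    continuous_collapse.comp (by fun_prop)
  refine isPreconnected_of_forall OnePoint.infty fun z hz => ?_
  induction z using OnePoint.rec with
  | infty => exact ⟨{OnePoint.infty}, singleton_subset_iff.2 hz, rfl, rfl, isPreconnected_singleton⟩
  | coe z =>
    obtain ⟨y, k⟩ := z
    by_cases hy : y = y₀
    · subst hy
      have hk : (k : K) ≠ k₀ := fun h => hz (by rw [Subtype.ext h]; rfl)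
      refine ⟨(fun k : K => collapse p (y, k)) '' {(k₀ : K)}ᶜ, ?_,
        ⟨p, fun h => k₀.2 h.symm, collapse_apex y⟩, ⟨k, hk, collapse_coe y k⟩,
        (hK k₀).image _ (hc y).continuousOn⟩
      rintro _ ⟨l, hl, rfl⟩ h
      have h : collapse p (y, l) = OnePoint.some (y, k₀) := h
      by_cases hlp : l = p
      · subst hlp
        rw [collapse_apex] at h
        exact OnePoint.infty_ne_coe _ h
      · rw [collapse_of_ne y hlp, OnePoint.coe_eq_coe, Prod.mk.injEq] at h
        exact hl (congrArg Subtype.val h.2)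
    · refine ⟨(fun k : K => collapse p (y, k)) '' univ, ?_,
        ⟨p, mem_univ _, collapse_apex y⟩, ⟨k, mem_univ _, collapse_coe y k⟩,
        isPreconnected_univ.image _ (hc y).continuousOn⟩
      rintro _ ⟨l, -, rfl⟩ h
      have h : collapse p (y, l) = OnePoint.some (y₀, k₀) := h
      by_cases hlp : l = p
      · subst hlp
        rw [collapse_apex] at h
        exact OnePoint.infty_ne_coe _ h
      · rw [collapse_of_ne y hlp, OnePoint.coe_eq_coe, Prod.mk.injEq] at h
        exact hy h.1

theorem not_isPreconnected_compl_infty [TotallyDisconnectedSpace Y] [Nontrivial Y] [Nontrivial K] :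
    ¬ IsPreconnected ({OnePoint.infty}ᶜ : Set (KCone Y K p)) := by
  intro h
  rw [OnePoint.compl_infty, ← image_univ,
    OnePoint.isOpenEmbedding_coe.isInducing.isPreconnected_image] at h
  have h2 := (h.image Prod.fst continuous_fst.continuousOn).subsingleton
  obtain ⟨a, b, hab⟩ := exists_pair_ne Y
  obtain ⟨k, hk⟩ := exists_ne p
  exact hab (h2 ⟨(a, ⟨k, hk⟩), mem_univ _, rfl⟩ ⟨(b, ⟨k, hk⟩), mem_univ _, rfl⟩)

theorem map_infty [CompactSpace Z] [T2Space Z] [CompactSpace K] [T2Space K]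
    [ConnectedSpace K] [Nontrivial K] [TotallyDisconnectedSpace Y] [Nontrivial Y]
    (hK : ∀ k : K, IsPreconnected ({k}ᶜ : Set K))
    (h : KCone Y K p ≃ₜ KCone Z K p) : h OnePoint.infty = OnePoint.infty := by
  by_contra hne
  have h1 := (isPreconnected_compl_singleton hK hne).image h.symm h.symm.continuous.continuousOn
  rw [image_compl_eq h.symm.bijective, image_singleton, h.symm_apply_apply] at h1
  exact not_isPreconnected_compl_infty h1

/-- A homeomorphism of cones fixing the apex maps each `{y} × (K \ {p})` into some
`{z} × (K \ {p})`, because `K \ {p}` is connected. -/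
theorem exists_base_map [TotallyDisconnectedSpace Z] (hK : IsPreconnected ({p}ᶜ : Set K))
    (k₀ : {k : K // k ≠ p}) (h : KCone Y K p ≃ₜ KCone Z K p)
    (hi : h OnePoint.infty = OnePoint.infty) :
    ∃ f : Y → Z, Continuous f ∧ ∀ y k, ∃ l, h (OnePoint.some (y, k)) = OnePoint.some (f y, l) := by
  have : ∀ a : Y × {k : K // k ≠ p}, ∃ b : Z × {k : K // k ≠ p},
      OnePoint.some b = h (OnePoint.some a) := fun a => by
    refine OnePoint.ne_infty_iff_exists.1 fun ha => ?_
    exact OnePoint.coe_ne_infty a (h.injective (ha.trans hi.symm))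
  choose F hF using this
  have hFc : Continuous F := by
    rw [OnePoint.isOpenEmbedding_coe.isInducing.continuous_iff]
    exact (h.continuous.comp OnePoint.continuous_coe).congr fun a => (hF a).symm
  have : PreconnectedSpace {k : K // k ≠ p} := Subtype.preconnectedSpace hK
  refine ⟨fun y => (F (y, k₀)).1, by fun_prop, fun y k => ⟨(F (y, k)).2, ?_⟩⟩
  have hs := (isPreconnected_range (f := fun k => (F (y, k)).1) (by fun_prop)).subsingleton
  rw [← hF, hs ⟨k₀, rfl⟩ ⟨k, rfl⟩]

theorem nonempty_homeomorph [CompactSpace Y] [T2Space Y] [CompactSpace Z] [T2Space Z]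
    [CompactSpace K] [T2Space K] [ConnectedSpace K] [Nontrivial K]
    [TotallyDisconnectedSpace Y] [Nontrivial Y] [TotallyDisconnectedSpace Z]
    (hK : ∀ k : K, IsPreconnected ({k}ᶜ : Set K))
    (h : KCone Y K p ≃ₜ KCone Z K p) : Nonempty (Y ≃ₜ Z) := by
  have hi := map_infty hK h
  obtain ⟨k₀, hk₀⟩ := exists_ne p
  obtain ⟨f, hf, hfh⟩ := exists_base_map (hK p) ⟨k₀, hk₀⟩ h hi
  obtain ⟨g, hg, hgh⟩ := exists_base_map (hK p) ⟨k₀, hk₀⟩ h.symm (by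
    rw [h.symm_apply_eq, hi])
  refine ⟨⟨⟨f, g, fun y => ?_, fun z => ?_⟩, hf, hg⟩⟩
  · obtain ⟨l, hl⟩ := hfh y ⟨k₀, hk₀⟩
    obtain ⟨m, hm⟩ := hgh (f y) l
    rw [← hl, h.symm_apply_apply, OnePoint.coe_eq_coe] at hm
    exact (congrArg Prod.fst hm).symm
  · obtain ⟨l, hl⟩ := hgh z ⟨k₀, hk₀⟩
    obtain ⟨m, hm⟩ := hfh (g z) l
    rw [← hl, h.apply_symm_apply, OnePoint.coe_eq_coe] at hm
    exact (congrArg Prod.fst hm).symm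

theorem isContinuum [CompactSpace Y] [T2Space Y] [Nonempty Y] [CompactSpace K] [T2Space K]
    [PathConnectedSpace K] [Nontrivial K] : IsContinuum (KCone Y K p) := by
  have := pathConnectedSpace (Y := Y) (p := p)
  have : LocallyCompactSpace {k : K // k ≠ p} :=
    (isOpen_compl_singleton (x := p)).locallyCompactSpace
  obtain ⟨k, hk⟩ := exists_ne p
  exact ⟨inferInstance, inferInstance, inferInstance, ⟨OnePoint.infty,
    OnePoint.some (Classical.arbitrary Y, ⟨k, hk⟩), OnePoint.infty_ne_coe _⟩⟩

theorem wt_le [CompactSpace Y] [T2Space Y] [Nonempty Y] [CompactSpace K] [T2Space K]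
    {κ : Cardinal.{u}} (hκ : ℵ₀ ≤ κ) (hY : wt Y ≤ κ) (hw : wt K ≤ κ) : wt (KCone Y K p) ≤ κ := by
  have : LocallyCompactSpace {k : K // k ≠ p} :=
    (isOpen_compl_singleton (x := p)).locallyCompactSpace
  exact wt_le_of_surjective hκ (wt_prod_le hκ hY hw) continuous_collapse collapse_surjective

theorem wt_base_le [Nontrivial K] : wt Y ≤ wt (KCone Y K p) := by
  obtain ⟨k, hk⟩ := exists_ne p
  have h : IsInducing fun y : Y => (y, (⟨k, hk⟩ : {k : K // k ≠ p})) :=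
    .of_comp (by fun_prop) continuous_fst .id
  exact wt_le_of_isInducing (OnePoint.isOpenEmbedding_coe.isInducing.comp h)

theorem mk_le [Nonempty Y] : #(KCone Y K p) ≤ #Y * #K :=
  (mk_le_of_surjective collapse_surjective).trans_eq (mul_def _ _).symm

theorem mk_fibre_le [Nonempty Y] : #K ≤ #(KCone Y K p) := by
  let y := Classical.arbitrary Y
  refine mk_le_of_injective (f := fun k : K => collapse p (y, k)) fun k l h => ?_
  have h : collapse p (y, k) = collapse p (y, l) := h
  by_cases hk : k = p <;> by_cases hl : l = p
  · rw [hk, hl]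
  · rw [hk, collapse_apex, collapse_of_ne y hl] at h
    exact (OnePoint.infty_ne_coe _ h).elim
  · rw [hl, collapse_apex, collapse_of_ne y hk] at h
    exact (OnePoint.coe_ne_infty _ h).elim
  · rw [collapse_of_ne y hk, collapse_of_ne y hl, OnePoint.coe_eq_coe, Prod.mk.injEq] at h
    exact congrArg Subtype.val h.2

end

/-- Every nonempty open subset of a cone with generating continuum `J × J` contains a copy of some
nonempty open subset of `J`. -/
theorem exists_isOpen_embedding {Y J : Type u} [TopologicalSpace Y] [TopologicalSpace J]
    [CompactSpace Y] [T2Space Y] [CompactSpace J] [T2Space J] [ConnectedSpace J]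
    [Nontrivial J] [Nonempty Y] {p : J × J} {U : Set (KCone Y (J × J) p)} (hU : IsOpen U)
    (hne : U.Nonempty) :
    ∃ W : Set J, IsOpen W ∧ W.Nonempty ∧ ∃ f : W → U, IsEmbedding f := by
  obtain ⟨u, hu⟩ := hne
  obtain ⟨⟨y, k⟩, rfl⟩ := collapse_surjective u
  have hO : IsOpen ((fun k => collapse p (y, k)) ⁻¹' U) :=
    hU.preimage (continuous_collapse.comp (by fun_prop))
  obtain ⟨⟨a, b⟩, hab, hp⟩ : ∃ l ∈ (fun k => collapse p (y, k)) ⁻¹' U, l ≠ p := by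
    by_contra! h
    have h1 : (fun k => collapse p (y, k)) ⁻¹' U = {p} :=
      eq_singleton_iff_nonempty_unique_mem.2 ⟨⟨k, hu⟩, h⟩
    rw [h1] at hO
    exact not_isOpen_singleton p hO
  let s : J → J × J := fun x => (x, b)
  have hs : Continuous s := by fun_prop
  refine ⟨s ⁻¹' ((fun k => collapse p (y, k)) ⁻¹' U ∩ {p}ᶜ),
    (hO.inter isOpen_compl_singleton).preimage hs, ⟨a, hab, hp⟩, ?_⟩
  let g : (s ⁻¹' ((fun k => collapse p (y, k)) ⁻¹' U ∩ {p}ᶜ) : Set J) → Y × {k : J × J // k ≠ p} :=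
    fun w => (y, ⟨s w, w.2.2⟩)
  have hgc : Continuous g := by fun_prop
  have hg : IsEmbedding g :=
    .of_comp (g := fun z : Y × {k : J × J // k ≠ p} => z.2.1.1) hgc (by fun_prop)
      IsEmbedding.subtypeVal
  have hG := OnePoint.isOpenEmbedding_coe.isEmbedding.comp hg
  exact ⟨_, hG.codRestrict U fun w => by
    have : collapse p (y, s w) ∈ U := w.2.1
    rwa [collapse_of_ne y w.2.2] at this⟩

theorem isBalanced {Y J : Type u} [TopologicalSpace Y] [TopologicalSpace J]
    [CompactSpace Y] [T2Space Y] [CompactSpace J] [T2Space J] [ConnectedSpace J]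
    [Nontrivial J] [Nonempty Y] {p : J × J} (hJ : IsBalanced J)
    (hm : #(KCone Y (J × J) p) ≤ #J) (hw : wt (KCone Y (J × J) p) ≤ wt J) :
    IsBalanced (KCone Y (J × J) p) := by
  intro U hU hne
  obtain ⟨W, hW, hWne, f, hf⟩ := exists_isOpen_embedding hU hne
  obtain ⟨h1, h2⟩ := hJ W hW hWne
  exact ⟨le_antisymm (mk_subtype_le _)
      (hm.trans (h1.ge.trans (mk_le_of_injective hf.injective))),
    le_antisymm (wt_le_of_isInducing IsInducing.subtypeVal)
      (hw.trans (h2.ge.trans (wt_le_of_isInducing hf.isInducing)))⟩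

end KCone

/-! ### A Cantor–Bendixson invariant -/

/-- The perfect kernel: the union of all dense-in-itself subsets. -/
def perfectKernel (X : Type*) [TopologicalSpace X] : Set X :=
  ⋃₀ {Q | Preperfect Q}

/-- The transfinite Cantor–Bendixson derivatives of the scattered part of `X`, that is, of the
complement of the perfect kernel: `scatteredDeriv X β` consists of the scattered points that are
accumulation points of `scatteredDeriv X γ` for every `γ < β`. -/
def scatteredDeriv (X : Type*) [TopologicalSpace X] (β : Ordinal.{u}) : Set X :=
  {x | x ∉ perfectKernel X ∧ ∀ γ < β, AccPt x (Filter.principal (scatteredDeriv X γ))}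
termination_by β

/-- The ordinals `a` for which some point of the perfect kernel is an accumulation point of the
`a`-th scattered derivative and not of the next one. -/
def rankInvariant (X : Type*) [TopologicalSpace X] : Set Ordinal.{u} :=
  {a | ∃ x ∈ perfectKernel X, AccPt x (Filter.principal (scatteredDeriv X a)) ∧
    ¬ AccPt x (Filter.principal (scatteredDeriv X (a + 1)))}

theorem mem_scatteredDeriv {X : Type*} [TopologicalSpace X] {β : Ordinal.{u}} {x : X} :
    x ∈ scatteredDeriv X β ↔
      x ∉ perfectKernel X ∧ ∀ γ < β, AccPt x (Filter.principal (scatteredDeriv X γ)) := by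
  rw [scatteredDeriv]; rfl

theorem AccPt.image_homeomorph {X Z : Type*} [TopologicalSpace X] [TopologicalSpace Z]
    (h : X ≃ₜ Z) {x : X} {S : Set X} (hx : AccPt x (Filter.principal S)) :
    AccPt (h x) (Filter.principal (h '' S)) := by
  simpa using hx.map h.continuous.continuousAt h.injective

theorem accPt_image_iff {X Z : Type*} [TopologicalSpace X] [TopologicalSpace Z]
    (h : X ≃ₜ Z) (x : X) (S : Set X) :
    AccPt (h x) (Filter.principal (h '' S)) ↔ AccPt x (Filter.principal S) := by
  refine ⟨fun hx => ?_, fun hx => hx.image_homeomorph h⟩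
  simpa [image_image] using hx.image_homeomorph h.symm

theorem mem_perfectKernel_of_homeomorph {X Z : Type*} [TopologicalSpace X] [TopologicalSpace Z]
    (h : X ≃ₜ Z) {x : X} (hx : x ∈ perfectKernel X) : h x ∈ perfectKernel Z := by
  obtain ⟨Q, hQ, hxQ⟩ := hx
  refine ⟨h '' Q, ?_, mem_image_of_mem h hxQ⟩
  rintro _ ⟨y, hy, rfl⟩
  exact (accPt_image_iff h y Q).2 (hQ y hy)

theorem apply_mem_perfectKernel_iff {X Z : Type*} [TopologicalSpace X] [TopologicalSpace Z]
    (h : X ≃ₜ Z) {x : X} : h x ∈ perfectKernel Z ↔ x ∈ perfectKernel X :=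
  ⟨fun hx => by simpa using mem_perfectKernel_of_homeomorph h.symm hx,
    mem_perfectKernel_of_homeomorph h⟩

theorem image_scatteredDeriv {X Z : Type*} [TopologicalSpace X] [TopologicalSpace Z]
    (h : X ≃ₜ Z) (β : Ordinal.{u}) : h '' scatteredDeriv X β = scatteredDeriv Z β := by
  induction β using WellFoundedLT.induction with
  | ind β ih =>
    ext z
    obtain ⟨x, rfl⟩ := h.surjective z
    rw [h.injective.mem_set_image, mem_scatteredDeriv, mem_scatteredDeriv,
      apply_mem_perfectKernel_iff]
    refine and_congr_right fun _ => forall₂_congr fun γ hγ => ?_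
    rw [← ih γ hγ, accPt_image_iff]

theorem rankInvariant_eq_of_homeomorph {X Z : Type*} [TopologicalSpace X] [TopologicalSpace Z]
    (h : X ≃ₜ Z) : rankInvariant.{u} X = rankInvariant.{u} Z := by
  ext a
  refine ⟨?_, ?_⟩
  · rintro ⟨x, hx, h1, h2⟩
    refine ⟨h x, mem_perfectKernel_of_homeomorph h hx, ?_, ?_⟩
    · rwa [← image_scatteredDeriv h, accPt_image_iff]
    · rwa [← image_scatteredDeriv h, accPt_image_iff]
  · rintro ⟨x, hx, h1, h2⟩
    refine ⟨h.symm x, mem_perfectKernel_of_homeomorph h.symm hx, ?_, ?_⟩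
    · rwa [← image_scatteredDeriv h.symm, accPt_image_iff]
    · rwa [← image_scatteredDeriv h.symm, accPt_image_iff]

open Ordinal Order

/-! ### Divisibility by powers of `ω` -/

/-- A nonzero ordinal in which the multiples of `ω ^ γ` are cofinal is `ω ^ γ` times a limit. -/
theorem opow_succ_dvd_of_cofinal {γ δ : Ordinal.{u}} (hδ : δ ≠ 0)
    (h : ∀ b < δ, ∃ t, ω ^ γ ∣ t ∧ b < t ∧ t < δ) : ω ^ (γ + 1) ∣ δ := by
  have hγ : (ω : Ordinal.{u}) ^ γ ≠ 0 := (opow_pos _ omega0_pos).ne'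
  have hp : (0 : Ordinal.{u}) < ω ^ γ := opow_pos _ omega0_pos
  have key : ∀ q, ω ^ γ * q < δ → ω ^ γ * (q + 1) < δ := by
    intro q hq
    obtain ⟨_, ⟨r, rfl⟩, h1, h2⟩ := h _ hq
    rw [mul_lt_mul_iff_right₀ hp] at h1
    exact (mul_le_mul_right (succ_le_of_lt h1) _).trans_lt h2
  have hs : δ % ω ^ γ = 0 := by
    by_contra hs
    have h1 : ω ^ γ * (δ / ω ^ γ) < δ := by
      conv_rhs => rw [← div_add_mod δ (ω ^ γ)]
      exact lt_add_of_pos_right _ (pos_iff_ne_zero.2 hs)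
    exact (key _ h1).not_gt (by rw [mul_add_one]; exact lt_mul_div_add δ hγ)
  obtain ⟨q, rfl⟩ := dvd_of_mod_eq_zero hs
  have hq : IsSuccPrelimit q := by
    rw [isSuccPrelimit_iff_succ_lt]
    intro r hr
    have := key r ((mul_lt_mul_iff_right₀ hp).2 hr)
    exact (mul_lt_mul_iff_right₀ hp).1 this
  obtain ⟨q', rfl⟩ := isSuccPrelimit_iff_omega0_dvd.1 hq
  exact ⟨q', by rw [opow_add, opow_one, mul_assoc]⟩

theorem exists_dvd_between {γ δ b : Ordinal.{u}} (hδ : δ ≠ 0) (h : ω ^ (γ + 1) ∣ δ) (hb : b < δ) :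
    ∃ t, ω ^ γ ∣ t ∧ b < t ∧ t < δ := by
  obtain ⟨q', rfl⟩ := h
  rw [opow_add, opow_one, mul_assoc] at *
  have hp : (0 : Ordinal.{u}) < ω ^ γ := opow_pos _ omega0_pos
  have hq : IsSuccLimit (ω * q') :=
    isSuccLimit_iff.2 ⟨right_ne_zero_of_mul hδ, isSuccPrelimit_iff_omega0_dvd.2 ⟨q', rfl⟩⟩
  obtain ⟨r, hr, hbr⟩ := (lt_mul_iff_of_isSuccLimit hq).1 hb
  exact ⟨_, dvd_mul_right _ r, hbr, (mul_lt_mul_iff_right₀ hp).2 hr⟩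

/-- At a limit `β` the remainder modulo `ω ^ β` is less than, yet divisible by, some `ω ^ γ` with
`γ < β`, so it is `0`. -/
theorem opow_dvd_of_forall {β δ : Ordinal.{u}} (h : ∀ γ < β, ω ^ (γ + 1) ∣ δ) : ω ^ β ∣ δ := by
  induction β using Ordinal.limitRecOn with
  | zero => simp
  | add_one γ _ => exact h γ (lt_add_one γ)
  | limit β hβ _ =>
    have hp : (ω : Ordinal.{u}) ^ β ≠ 0 := (opow_pos _ omega0_pos).ne'
    refine dvd_of_mod_eq_zero ?_
    by_contra hr
    obtain ⟨γ, hγ, hlt⟩ := (lt_opow_of_isSuccLimit omega0_ne_zero hβ).1 (mod_lt δ hp)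
    have hd : ω ^ γ ∣ δ := (opow_dvd_opow _ (le_succ γ)).trans (h γ hγ)
    rw [← div_add_mod δ (ω ^ β), dvd_add_iff ((opow_dvd_opow _ hγ.le).mul_right _)] at hd
    exact hlt.not_ge (le_of_dvd hr hd)

/-! ### Stone spaces that encode sets of ordinals -/

/-- The union of the ordinal intervals `(ω ^ a, ω ^ (a + 1))` with `a ∈ A`. -/
def gaps (A : Set Ordinal.{u}) : Set Ordinal.{u} :=
  {x | ∃ a ∈ A, ω ^ a < x ∧ x < ω ^ (a + 1)}

/-- The space of ordinals `≤ o` in which every ordinal outside `gaps A` is fattened to a Cantor set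
of copies of itself. It is encoded inside the product of the ordinals with the Cantor space, the
distinguished copy being the one with the zero sequence as second coordinate. -/
def marked (o : Ordinal.{u}) (A : Set Ordinal.{u}) : Set (Ordinal.{u} × (ℕ → Bool)) :=
  {x | x.1 ≤ o ∧ (x.1 ∈ gaps A → x.2 = fun _ => false)}

section

variable {o : Ordinal.{u}} {A : Set Ordinal.{u}}

theorem isOpen_gaps : IsOpen (gaps A) := by
  have : gaps A = ⋃ a ∈ A, Ioo (ω ^ a) (ω ^ (a + 1)) := by
    ext x; simp only [gaps, mem_iUnion₂, mem_Ioo, exists_prop]; rfl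
  rw [this]
  exact isOpen_biUnion fun a _ => isOpen_Ioo

theorem mem_gaps_iff {η x : Ordinal.{u}} (h1 : ω ^ η ≤ x) (h2 : x < ω ^ (η + 1)) :
    x ∈ gaps A ↔ η ∈ A ∧ ω ^ η < x := by
  refine ⟨?_, fun h => ⟨η, h.1, h.2, h2⟩⟩
  rintro ⟨a, ha, h3, h4⟩
  have h5 := (opow_lt_opow_iff_right one_lt_omega0).1 (h1.trans_lt h4)
  have h6 := (opow_lt_opow_iff_right one_lt_omega0).1 (h3.trans h2)
  obtain rfl : a = η := le_antisymm (lt_add_one_iff.1 h6) (lt_add_one_iff.1 h5)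
  exact ⟨ha, h3⟩

theorem ne_zero_of_mem_gaps {x : Ordinal.{u}} (h : x ∈ gaps A) : x ≠ 0 := by
  obtain ⟨a, -, h, -⟩ := h
  exact h.ne_bot

theorem marked_ext {x y : marked o A} (hx : x.1.1 ∈ gaps A) (h : y.1.1 = x.1.1) : y = x :=
  Subtype.ext (Prod.ext h ((y.2.2 (h ▸ hx)).trans (x.2.2 hx).symm))

/-- Only the distinguished copy of an ordinal can be a limit of gap points, and it is a limit of
those over `T` exactly when the ordinal is a limit of `T` from below. -/
theorem accPt_marked_iff {T : Set Ordinal.{u}} (hT : T ⊆ gaps A) (x : marked o A) :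
    AccPt x (Filter.principal {z : marked o A | z.1.1 ∈ T}) ↔
      (x.1.2 = fun _ => false) ∧ x.1.1 ≠ 0 ∧ ∀ b < x.1.1, ∃ t ∈ T, b < t ∧ t < x.1.1 := by
  have c1 : Continuous fun z : marked o A => z.1.1 := by fun_prop
  have c2 : Continuous fun z : marked o A => z.1.2 := by fun_prop
  rw [accPt_iff_nhds]
  refine ⟨fun h => ?_, ?_⟩
  · have hx : x.1.2 = fun _ => false := by
      by_contra hx
      obtain ⟨y, ⟨hy, hyT⟩, -⟩ := h _ ((isOpen_compl_singleton.preimage c2).mem_nhds hx)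
      exact hy (y.2.2 (hT hyT))
    refine ⟨hx, fun h0 => ?_, fun b hb => ?_⟩
    · obtain ⟨y, ⟨hy, hyT⟩, -⟩ := h _ (((isOpen_Iio (a := (1 : Ordinal.{u}))).preimage
        c1).mem_nhds (by simp [h0]))
      exact ne_zero_of_mem_gaps (hT hyT) (lt_one_iff.1 hy)
    · obtain ⟨y, ⟨hy, hyT⟩, hne⟩ := h _ (((isOpen_Ioo (a := b) (b := x.1.1 + 1)).preimage
        c1).mem_nhds ⟨hb, lt_add_one _⟩)
      refine ⟨y.1.1, hyT, hy.1, (lt_add_one_iff.1 hy.2).lt_of_ne fun he => hne ?_⟩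
      exact Subtype.ext (Prod.ext he ((y.2.2 (hT hyT)).trans hx.symm))
  · rintro ⟨hx, h0, h⟩ U hU
    obtain ⟨V, hV, hVU⟩ := mem_nhds_subtype _ _ _ |>.1 hU
    obtain ⟨V₁, hV₁, V₂, hV₂, hV₁₂⟩ := mem_nhds_prod_iff.1 hV
    obtain ⟨b, hb, hbV⟩ := exists_Ioc_subset_of_mem_nhds hV₁ ⟨0, pos_iff_ne_zero.2 h0⟩
    obtain ⟨t, ht, hbt, htx⟩ := h b hb
    refine ⟨⟨(t, fun _ => false), htx.le.trans x.2.1, fun _ => rfl⟩,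
      ⟨hVU (hV₁₂ ⟨hbV ⟨hbt, htx.le⟩, ?_⟩), ht⟩,
      fun he => htx.ne (congrArg (fun z : marked o A => z.1.1) he)⟩
    have := mem_of_mem_nhds hV₂
    rwa [hx] at this

/-- The fibres over ordinals outside the gaps are Cantor sets, while the part over the gaps is open
and a homeomorphic copy of a set of ordinals and hence scattered. -/
theorem mem_perfectKernel_marked_iff {x : marked o A} :
    x ∈ perfectKernel (marked o A) ↔ x.1.1 ∉ gaps A := by
  constructor
  · rintro ⟨Q, hQ, hxQ⟩ hx
    -- A point of `Q` with least first coordinate in `gaps A` would be isolated in `Q`.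
    obtain ⟨m, ⟨z, hzQ, hz, rfl⟩, hmin⟩ := WellFounded.has_min (wellFounded_lt (α := Ordinal.{u}))
      {m | ∃ z ∈ Q, z.1.1 ∈ gaps A ∧ z.1.1 = m} ⟨_, x, hxQ, hx, rfl⟩
    have c1 : Continuous fun z : marked o A => z.1.1 := by fun_prop
    have hO : IsOpen (gaps A ∩ Iio (z.1.1 + 1)) := isOpen_gaps.inter isOpen_Iio
    obtain ⟨y, ⟨hy, hyQ⟩, hne⟩ := accPt_iff_nhds.1 (hQ z hzQ) _
      ((hO.preimage c1).mem_nhds ⟨hz, lt_add_one z.1.1⟩)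
    refine hne (marked_ext hz (le_antisymm (lt_add_one_iff.1 hy.2) (not_lt.1 ?_)))
    exact hmin _ ⟨y, hyQ, hy.1, rfl⟩
  · intro hx
    refine ⟨{z | z.1.1 = x.1.1}, fun z hz => accPt_iff_nhds.2 fun U hU => ?_, rfl⟩
    have hz : z.1.1 = x.1.1 := hz
    let s : ℕ → marked o A := fun n =>
      ⟨(z.1.1, Function.update z.1.2 n (!z.1.2 n)), z.2.1, fun h => (hx (hz ▸ h)).elim⟩
    have hs : Filter.Tendsto s Filter.atTop (𝓝 z) := by
      rw [tendsto_subtype_rng, Prod.tendsto_iff]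
      refine ⟨tendsto_const_nhds, tendsto_pi_nhds.2 fun i => ?_⟩
      refine tendsto_const_nhds.congr' ?_
      filter_upwards [Filter.eventually_gt_atTop i] with n hn
      exact (Function.update_of_ne hn.ne _ _).symm
    obtain ⟨n, hn⟩ := (hs.eventually hU).exists
    refine ⟨s n, ⟨hn, hz⟩, fun he => ?_⟩
    have := congrArg (fun z : marked o A => z.1.2 n) he
    simp [s] at this

/-- If an interval below `δ` lies in `gaps A` and `ω ^ (γ + 1)` divides `δ`, then the multiples of
`ω ^ γ` in `gaps A` are cofinal in `δ`. -/
theorem exists_gaps_dvd_between {γ δ b c : Ordinal.{u}} (hδ : δ ≠ 0) (hd : ω ^ (γ + 1) ∣ δ)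
    (hc : c < δ) (hcA : Ioo c δ ⊆ gaps A) (hb : b < δ) :
    ∃ t ∈ {t | t ∈ gaps A ∧ ω ^ γ ∣ t}, b < t ∧ t < δ := by
  obtain ⟨t, h1, h2, h3⟩ := exists_dvd_between hδ hd (max_lt hb hc)
  exact ⟨t, ⟨hcA ⟨(le_max_right _ _).trans_lt h2, h3⟩, h1⟩, (le_max_left _ _).trans_lt h2, h3⟩

theorem scatteredDeriv_marked (β : Ordinal.{u}) :
    scatteredDeriv (marked o A) β = {z | z.1.1 ∈ {t | t ∈ gaps A ∧ ω ^ β ∣ t}} := by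
  induction β using WellFoundedLT.induction with
  | ind β ih =>
    ext z
    rw [mem_scatteredDeriv, mem_perfectKernel_marked_iff, not_not]
    refine and_congr_right fun hz => ⟨fun h => opow_dvd_of_forall fun γ hγ => ?_,
      fun h γ hγ => ?_⟩
    · have h := h γ hγ
      rw [ih γ hγ, accPt_marked_iff fun _ h => h.1] at h
      exact opow_succ_dvd_of_cofinal h.2.1 fun b hb =>
        let ⟨t, ht, h1, h2⟩ := h.2.2 b hb
        ⟨t, ht.2, h1, h2⟩
    · rw [ih γ hγ, accPt_marked_iff fun _ h => h.1]
      have h0 := ne_zero_of_mem_gaps hz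
      obtain ⟨c, hc, hcA⟩ := exists_Ioc_subset_of_mem_nhds (isOpen_gaps.mem_nhds hz)
        ⟨0, pos_iff_ne_zero.2 h0⟩
      exact ⟨z.2.2 hz, h0, fun b hb => exists_gaps_dvd_between h0
        ((opow_dvd_opow _ (add_one_le_iff.2 hγ)).trans h) hc (fun t ht => hcA ⟨ht.1, ht.2.le⟩) hb⟩

theorem accPt_scatteredDeriv_marked_iff {x : marked o A} {β : Ordinal.{u}} :
    AccPt x (Filter.principal (scatteredDeriv (marked o A) β)) ↔
      (x.1.2 = fun _ => false) ∧ x.1.1 ≠ 0 ∧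
        ∀ b < x.1.1, ∃ t ∈ {t | t ∈ gaps A ∧ ω ^ β ∣ t}, b < t ∧ t < x.1.1 := by
  rw [scatteredDeriv_marked, accPt_marked_iff fun _ h => h.1]

/-- The invariant recovers `A`: a point of the perfect kernel that witnesses `a` lies over
`ω ^ (a + 1)`, and the distinguished copy of `ω ^ (a + 1)` is a witness exactly when `a ∈ A`. -/
theorem rankInvariant_marked (hA : ∀ a ∈ A, ω ^ (a + 1) ≤ o) :
    rankInvariant (marked o A) = A := by
  ext a
  simp only [rankInvariant, mem_perfectKernel_marked_iff, accPt_scatteredDeriv_marked_iff,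
    mem_ofPred_eq]
  constructor
  · rintro ⟨⟨⟨δ, c⟩, hδo⟩, hδ, ⟨hc, h0, hacc⟩, hnot⟩
    simp only at hδ hc h0 hacc hnot
    have hd : ω ^ (a + 1) ∣ δ := opow_succ_dvd_of_cofinal h0 fun b hb =>
      let ⟨t, ht, h1, h2⟩ := hacc b hb
      ⟨t, ht.2, h1, h2⟩
    obtain ⟨η, hη1, hη2⟩ : ∃ η, ω ^ η ≤ δ ∧ δ < ω ^ (η + 1) :=
      ⟨log ω δ, opow_log_le_self _ h0, lt_opow_succ_log_self one_lt_omega0 _⟩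
    have hη : δ = ω ^ η := by
      by_contra hne
      have hlt : ω ^ η < δ := hη1.lt_of_ne (Ne.symm hne)
      obtain ⟨t, ⟨htA, -⟩, h1, h2⟩ := hacc _ hlt
      have := (mem_gaps_iff h1.le (h2.trans hη2)).1 htA
      exact hδ ((mem_gaps_iff hη1 hη2).2 ⟨this.1, hlt⟩)
    subst hη
    have haη : a + 1 ≤ η := (opow_le_opow_iff_right one_lt_omega0).1 (le_of_dvd h0 hd)
    rcases haη.eq_or_lt with rfl | hlt
    · obtain ⟨t, ⟨htA, -⟩, h1, h2⟩ := hacc (ω ^ a)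
        ((opow_lt_opow_iff_right one_lt_omega0).2 (lt_add_one a))
      exact ((mem_gaps_iff h1.le h2).1 htA).1
    · exfalso
      refine hnot ⟨hc, h0, fun b hb => ?_⟩
      obtain ⟨t, ⟨⟨e, heA, h3, h4⟩, htd⟩, h1, h2⟩ := hacc (max b (ω ^ (a + 1)))
        (max_lt hb ((opow_lt_opow_iff_right one_lt_omega0).2 hlt))
      have hae : a + 1 ≤ e := lt_add_one_iff.1 <| (opow_lt_opow_iff_right one_lt_omega0).1
        ((le_max_right _ _).trans_lt (h1.trans h4))
      have heη : e + 1 ≤ η := add_one_le_iff.2 <|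
        (opow_lt_opow_iff_right one_lt_omega0).1 (h3.trans h2)
      -- Some multiple of `ω ^ e` exceeds `t` within the same gap.
      obtain ⟨s, hs, hts, hse⟩ := exists_dvd_between (γ := e) (δ := ω ^ (e + 1))
        (opow_pos _ omega0_pos).ne' dvd_rfl h4
      exact ⟨s, ⟨⟨e, heA, h3.trans hts, hse⟩, (opow_dvd_opow _ hae).trans hs⟩,
        (le_max_left _ _).trans_lt (h1.trans hts),
        hse.trans_le (opow_le_opow_right omega0_pos heη)⟩
  · intro ha
    have hp : (ω : Ordinal.{u}) ^ (a + 1) ≠ 0 := (opow_pos _ omega0_pos).ne'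
    have hlt : (ω : Ordinal.{u}) ^ a < ω ^ (a + 1) :=
      (opow_lt_opow_iff_right one_lt_omega0).2 (lt_add_one a)
    have hgap : (ω : Ordinal.{u}) ^ (a + 1) ∉ gaps A := fun h =>
      lt_irrefl _ ((mem_gaps_iff le_rfl
        ((opow_lt_opow_iff_right one_lt_omega0).2 (lt_add_one _))).1 h).2
    refine ⟨⟨(ω ^ (a + 1), fun _ => false), hA a ha, fun _ => rfl⟩, hgap,
      ⟨rfl, hp, fun b hb => ?_⟩, ?_⟩
    · exact exists_gaps_dvd_between hp dvd_rfl hlt (fun t ht => ⟨a, ha, ht⟩) hb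
    · rintro ⟨-, -, h⟩
      obtain ⟨t, ⟨htA, htd⟩, -, htl⟩ := h 0 (pos_iff_ne_zero.2 hp)
      exact htl.not_ge (le_of_dvd (ne_zero_of_mem_gaps htA) htd)

end

section

theorem Iic_eq_Iio_add_one (a : Ordinal.{u}) : Iic a = Iio (a + 1) := by
  ext b
  exact (lt_add_one_iff (x := b) (y := a)).symm

instance Ordinal.totallyDisconnectedSpace : TotallyDisconnectedSpace Ordinal.{u} := by
  refine ⟨fun t _ ht x hx y hy => ?_⟩
  have key : ∀ {a b : Ordinal.{u}}, a ∈ t → b ∈ t → b ≤ a := fun {a b} ha hb => by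
    have hc : IsClopen (Iic a) := ⟨isClosed_Iic, by
      rw [Iic_eq_Iio_add_one]
      exact isOpen_Iio⟩
    exact ht.subset_isClopen hc ⟨a, ha, self_mem_Iic⟩ hb
  exact le_antisymm (key hy hx) (key hx hy)

variable (o : Ordinal.{u}) (A : Set Ordinal.{u})

instance : CompactSpace (marked o A) := by
  refine isCompact_iff_compactSpace.1 ?_
  have hc : IsClosed (marked o A) := by
    have : marked o A = Prod.fst ⁻¹' Iic o ∩
        (Prod.fst ⁻¹' (gaps A)ᶜ ∪ Prod.snd ⁻¹' {fun _ => false}) := by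
      ext x
      simp only [marked, imp_iff_not_or]
      rfl
    rw [this]
    exact (isClosed_Iic.preimage continuous_fst).inter
      ((isOpen_gaps.isClosed_compl.preimage continuous_fst).union
        (isClosed_singleton.preimage continuous_snd))
  refine ((isCompact_Icc (a := (0 : Ordinal.{u})) (b := o)).prod isCompact_univ).of_isClosed_subset
    hc fun x hx => ⟨⟨zero_le, hx.1⟩, mem_univ _⟩

/-- The coordinates of a point of `marked o A`. -/
def markedCoord (z : marked o A) : Iic o × (ℕ → Bool) := (⟨z.1.1, z.2.1⟩, z.1.2)

theorem isEmbedding_markedCoord : IsEmbedding (markedCoord o A) := by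
  have hc : Continuous (markedCoord o A) := by unfold markedCoord; fun_prop
  exact .of_comp (g := Prod.map Subtype.val id) hc (by fun_prop) IsEmbedding.subtypeVal

instance : Small.{u} (marked o A) := small_of_injective (isEmbedding_markedCoord o A).injective

/-- A copy of `marked o A`, whose own universe is one level higher, in the universe `u`. -/
abbrev StoneMarked : Type u := Shrink.{u} (marked o A)

instance : CompactSpace (StoneMarked o A) := (Shrink.homeomorph _).compactSpace

instance : T2Space (StoneMarked o A) := (Shrink.homeomorph _).t2Space

instance : TotallyDisconnectedSpace (StoneMarked o A) :=
  (Shrink.homeomorph (marked o A)).totallyDisconnectedSpace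

theorem exists_isEmbedding_stoneMarked : ∃ f : StoneMarked o A →
    Shrink.{u} (Iic o) × ULift.{u} (ℕ → Bool), IsEmbedding f :=
  ⟨_, (((Shrink.homeomorph.{u} (Iic o)).prodCongr
    (Homeomorph.ulift.{u} (X := ℕ → Bool)).symm).isEmbedding.comp
      (isEmbedding_markedCoord o A)).comp (Shrink.homeomorph (marked o A)).symm.isEmbedding⟩

theorem eq_of_homeomorph_stoneMarked {A B : Set Ordinal.{u}} (hA : ∀ a ∈ A, ω ^ (a + 1) ≤ o)
    (hB : ∀ a ∈ B, ω ^ (a + 1) ≤ o) (h : StoneMarked o A ≃ₜ StoneMarked o B) : A = B := by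
  rw [← rankInvariant_marked hA, ← rankInvariant_marked hB]
  exact rankInvariant_eq_of_homeomorph
    (((Shrink.homeomorph _).trans h).trans (Shrink.homeomorph _).symm)

variable {o} {κ : Cardinal.{u}}

theorem mk_shrink_Iic (hκ : ℵ₀ ≤ κ) (ho : o.card = κ) : #(Shrink.{u} (Iic o)) = κ := by
  have h : lift.{u + 1} #(Shrink.{u} (Iic o)) = #(Iic o) := by
    simpa only [Cardinal.lift_id] using lift_mk_shrink.{u + 1, u, u + 1} (Iic o)
  have h1 : #(Iic o) = lift.{u + 1} (o + 1).card := by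
    rw [← Cardinal.mk_Iio_ordinal, Iic_eq_Iio_add_one]
  rw [h1, Ordinal.card_add, Ordinal.card_one, ho, add_one_eq hκ] at h
  exact Cardinal.lift_injective h

theorem wt_stoneMarked_le (hκ : ℵ₀ ≤ κ) (ho : o.card = κ) : wt (StoneMarked o A) ≤ κ := by
  obtain ⟨f, hf⟩ := exists_isEmbedding_stoneMarked o A
  have : CompactSpace (Shrink.{u} (Iic o)) :=
    have : CompactSpace (Iic o) := by
      rw [← Icc_bot]; infer_instance
    (Shrink.homeomorph _).compactSpace
  have : T2Space (Shrink.{u} (Iic o)) := (Shrink.homeomorph _).t2Space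
  have : SecondCountableTopology (ULift.{u} (ℕ → Bool)) :=
    Homeomorph.ulift.isEmbedding.secondCountableTopology
  exact (wt_le_of_isInducing hf.isInducing).trans (wt_prod_le hκ
    (wt_le_mk _ hκ (mk_shrink_Iic hκ ho).le) ((wt_le_of_secondCountable _).trans hκ))

theorem mk_stoneMarked_le (hκ : ℵ₀ ≤ κ) (ho : o.card = κ) : #(StoneMarked o A) ≤ κ * 𝔠 := by
  obtain ⟨f, hf⟩ := exists_isEmbedding_stoneMarked o A
  refine (mk_le_of_injective hf.injective).trans_eq ?_
  rw [← mul_def, mk_shrink_Iic hκ ho]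
  simp

/-- The points `α + 1` with `α < κ` have pairwise disjoint neighbourhoods. -/
theorem le_wt_stoneMarked (hκ : ℵ₀ ≤ κ) (ho : κ.ord ≤ o) : κ ≤ wt (StoneMarked o A) := by
  let a : κ.ord.ToType → Ordinal.{u} := fun i => (ToType.mk.symm i : Iio κ.ord) + 1
  have ha : ∀ i, a i ≤ o := fun i =>
    ((isSuccLimit_ord hκ).add_one_lt (ToType.mk.symm i).2).le.trans ho
  have hinj : Function.Injective a := fun i j h => by
    have := Subtype.ext (add_one_inj.1 h)
    exact ToType.mk.symm.injective this
  let e := Shrink.homeomorph.{u} (marked o A)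
  let x : κ.ord.ToType → StoneMarked o A := fun i =>
    e ⟨(a i, fun _ => false), ha i, fun _ => rfl⟩
  have hx : ∀ i, (e.symm (x i)).1.1 = a i := fun i => by simp [x]
  rw [← mk_ord_toType κ]
  refine mk_le_wt x (fun i => {y | (e.symm y).1.1 ∈ ({a i} : Set Ordinal.{u})}) (fun i => ?_)
    fun i j => ?_
  · have : IsOpen ({a i} : Set Ordinal.{u}) := by
      rw [SuccOrder.isOpen_singleton_iff]
      exact not_isSuccLimit_add_one _
    exact this.preimage (by fun_prop)
  · change (e.symm (x j)).1.1 = a i ↔ _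
    rw [hx, hinj.eq_iff]

theorem nontrivial_stoneMarked (hκ : ℵ₀ ≤ κ) (ho : κ.ord ≤ o) : Nontrivial (StoneMarked o A) := by
  have h1 : 1 ≤ o := le_trans (by
    rw [← ord_one]; exact ord_le_ord.2 (one_le_aleph0.trans hκ)) ho
  let x : marked o A := ⟨(0, fun _ => false), zero_le, fun _ => rfl⟩
  let y : marked o A := ⟨(1, fun _ => false), h1, fun _ => rfl⟩
  have : Nontrivial (marked o A) :=
    ⟨x, y, fun h => zero_ne_one (congrArg (fun z : marked o A => z.1.1) h)⟩
  exact (equivShrink (marked o A)).symm.nontrivial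

end

/-! ### The family of continua -/

/-- The family of cones over the Stone spaces `StoneMarked`, indexed by the sets of ordinals below
`κ`; these are encoded as subsets of `κ.ord.ToType` to stay in the universe `u`. -/
theorem exists_continua (κ : Cardinal.{u}) (hκ : ℵ₀ ≤ κ) (J : Type u) [TopologicalSpace J]
    [CompactSpace J] [T2Space J] [Nontrivial J] [PathConnectedSpace J] (hw : wt J ≤ κ) :
    ∃ X : Set κ.ord.ToType → TopCat.{u},
      (∀ i, IsContinuum ↥(X i) ∧ PathConnectedSpace ↥(X i) ∧
        wt ↥(X i) = κ ∧ #↥(X i) = max κ #J) ∧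
      (∀ i j, i ≠ j → IsEmpty (↥(X i) ≃ₜ ↥(X j))) ∧
      ((IsBalanced J ∧ wt J = κ) → ∀ i, IsBalanced ↥(X i)) := by
  let o : Ordinal.{u} := ω ^ κ.ord
  have hκ0 : κ.ord ≠ 0 := (isSuccLimit_ord hκ).ne_bot
  have hoc : o.card = κ := by
    rw [card_omega0_opow hκ0, card_ord, max_eq_right hκ]
  have ho : κ.ord ≤ o := right_le_opow _ one_lt_omega0
  let s : Set κ.ord.ToType → Set Ordinal.{u} := fun i =>
    (fun a => (ToType.mk.symm a : Ordinal)) '' i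
  have hs : Function.Injective s :=
    (Subtype.val_injective.comp ToType.mk.symm.injective).image_injective
  have hso : ∀ i, ∀ a ∈ s i, ω ^ (a + 1) ≤ o := by
    rintro i _ ⟨a, -, rfl⟩
    exact opow_le_opow_right omega0_pos
      ((isSuccLimit_ord hκ).add_one_lt (ToType.mk.symm a).2).le
  have hN : ∀ i, Nontrivial (StoneMarked o (s i)) := fun i => nontrivial_stoneMarked _ hκ ho
  let p : J × J := Classical.arbitrary _
  have hJ : 𝔠 ≤ #J := continuum_le_mk
  have hJJ : #(J × J) = #J := by
    rw [← mul_def]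
    exact mul_eq_self (aleph0_le_continuum.trans hJ)
  have hm : ℵ₀ ≤ max κ #J := hκ.trans (le_max_left _ _)
  have hwt : ∀ i, wt (KCone (StoneMarked o (s i)) (J × J) p) = κ := fun i =>
    le_antisymm (KCone.wt_le hκ (wt_stoneMarked_le _ hκ hoc) (wt_prod_le hκ hw hw))
      ((le_wt_stoneMarked _ hκ ho).trans KCone.wt_base_le)
  have hcont : ∀ i, IsContinuum (KCone (StoneMarked o (s i)) (J × J) p) := fun i =>
    KCone.isContinuum
  have hmk : ∀ i, #(KCone (StoneMarked o (s i)) (J × J) p) = max κ #J := fun i => by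
    have hle : #J ≤ #(KCone (StoneMarked o (s i)) (J × J) p) := hJJ ▸ KCone.mk_fibre_le
    refine le_antisymm ?_ (max_le ?_ hle)
    · refine KCone.mk_le.trans ?_
      rw [hJJ]
      calc _ ≤ κ * 𝔠 * #J := mul_le_mul_left (mk_stoneMarked_le _ hκ hoc) _
        _ ≤ max κ #J * max κ #J * max κ #J :=
          mul_le_mul' (mul_le_mul' (le_max_left _ _) (hJ.trans (le_max_right _ _)))
            (le_max_right _ _)
        _ = max κ #J := by rw [mul_eq_self hm, mul_eq_self hm]
    · obtain ⟨_, _, _, _⟩ := hcont i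
      exact (hwt i).ge.trans (wt_le_mk _ (aleph0_le_continuum.trans (hJ.trans hle)) le_rfl)
  refine ⟨fun i => TopCat.of (KCone (StoneMarked o (s i)) (J × J) p),
    fun i => ⟨hcont i, KCone.pathConnectedSpace, hwt i, hmk i⟩, fun i j hij => ⟨fun h => ?_⟩, ?_⟩
  · obtain ⟨g⟩ := KCone.nonempty_homeomorph isPreconnected_compl_singleton_prod h
    exact hij (hs (eq_of_homeomorph_stoneMarked o (hso i) (hso j) g))
  · rintro ⟨hb, hwJ⟩ i
    refine KCone.isBalanced hb ?_ ((hwt i).trans hwJ.symm).le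
    -- An infinite compact Hausdorff space has at least as many points as its weight.
    rw [hmk i, max_eq_right]
    exact hwJ.ge.trans (wt_le_mk _ (aleph0_le_continuum.trans hJ) le_rfl)

end

/-- If `J` is a path-connected continuum with `w(J) ≤ κ` then there are `2 ^ κ` pairwise
non-homeomorphic path-connected continua of weight `κ` and size `max {κ, |J|}`, which are
moreover balanced if `J` is balanced with `w(J) = κ`. -/
theorem many_pathconnected_continua
    (κ : Cardinal.{u}) (hκ : ℵ₀ ≤ κ) (J : TopCat.{u})
    (hJc : IsContinuum ↥J) (hJp : PathConnectedSpace ↥J) (hw : wt ↥J ≤ κ) :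
    ∃ (ι : Type u) (X : ι → TopCat.{u}),
      #ι = 2 ^ κ ∧
      (∀ i, IsContinuum ↥(X i) ∧ PathConnectedSpace ↥(X i) ∧
        wt ↥(X i) = κ ∧ #↥(X i) = max κ #↥J) ∧
      (∀ i j : ι, i ≠ j → IsEmpty (↥(X i) ≃ₜ ↥(X j))) ∧
      ((IsBalanced ↥J ∧ wt ↥J = κ) → ∀ i, IsBalanced ↥(X i)) := by
  obtain ⟨_, _, _, _⟩ := hJc
  obtain ⟨X, h⟩ := exists_continua κ hκ J hw
  exact ⟨_, X, by rw [mk_set, mk_ord_toType], h⟩
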